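/- arXiv:math/0312287 — 2 statements merged into one kernel-verified Lean document; each statement's English description precedes it below -/
import Mathlib

section
/- (Switching) Let G(V,E) be a tree with boundary, and let (v₁,u₁), (v₂,u₂) ∈ E be edges such that u₂ lies on the geodesic path from v₁ to v₂ but u₁ does not. Let G'(V,E') be the graph obtained from G by replacing the edges (v₁,u₁) and (v₂,u₂) by the edges (v₁,v₂) and (u₁,u₂). Then G' is again a tree with boundary with the same degree sequence and the same set of boundary vertices as G. Moreover, for every real function f on V vanishing on the boundary vertices with f(v₁) ≥ f(u₂) and f(v₂) ≥ f(u₁), one has ⟨Δ(G')f, f⟩ ≤ ⟨Δ(G)f, f⟩ (equivalently R_{G'}(f) ≤ R_G(f) when f ≠ 0), and the inequality is strict if both inequalities f(v₁) ≥ f(u₂) and f(v₂) ≥ f(u₁) are strict. -/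
/-!
When `v₁ ≠ u₂` the geodesic conditions, in a triangle-free graph, force the new edges to be absent
from `G`, so that switching exchanges two edges of `G` for two non-edges with the same four
endpoints. Hence all degrees are preserved, and the quadratic form changes by
`(f v₁ - f v₂)² + (f u₁ - f u₂)² - (f v₁ - f u₁)² - (f v₂ - f u₂)²
  = -2 (f v₁ - f u₂) (f v₂ - f u₁)`.

A geodesic from `v₁` to `u₂` meets neither `u₁` nor `v₂`, so it survives the switching. Together
with the new edges it joins the endpoints of each removed edge, so the switched graph is connected;
a connected graph with the degrees of a tree is a tree. If `v₁ = u₂`, the new edges are the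
removed ones.
-/

/-!
Common definitions for Faber-Krahn type inequalities for trees
(Bıyıkoğlu–Leydold, "Faber-Krahn Type Inequalities for Trees").

A *tree (graph) with boundary* is a finite simple connected graph in which
boundary vertices are exactly the vertices of degree 1 and interior vertices
are the vertices of degree ≥ 2; both sets are required to be nonempty.
The Dirichlet operator is the Laplacian restricted to functions vanishing on
the boundary; `dirichletLambda` is its smallest eigenvalue.
-/

open Finset
open scoped Classical

noncomputable section

namespace FK

variable {V : Type*} [Fintype V] [DecidableEq V]

/-- A vertex is a boundary vertex iff it has degree `1`. -/
def IsBoundary (G : SimpleGraph V) (v : V) : Prop := G.degree v = 1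

/-- A vertex is an interior vertex iff it has degree at least `2`. -/
def IsInterior (G : SimpleGraph V) (v : V) : Prop := 2 ≤ G.degree v

/-- A tree with boundary: a tree with at least one interior and
one boundary vertex. -/
def IsTreeWithBoundary (G : SimpleGraph V) : Prop :=
  G.IsTree ∧ (∃ v, IsInterior G v) ∧ (∃ v, IsBoundary G v)

/-- A connected graph with boundary: every vertex is either a boundary vertex
(degree 1) or an interior vertex (degree ≥ 2), both kinds occur, and no edge
joins two boundary vertices. -/
def IsGraphWithBoundary (G : SimpleGraph V) : Prop :=
  G.Connected ∧ (∀ v, IsBoundary G v ∨ IsInterior G v) ∧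
    (∃ v, IsInterior G v) ∧ (∃ v, IsBoundary G v) ∧
    (∀ v w, G.Adj v w → IsBoundary G v → ¬ IsBoundary G w)

/-- The finset of interior vertices. -/
def interiorFinset (G : SimpleGraph V) : Finset V := univ.filter (fun v => IsInterior G v)

/-- The finset of boundary vertices. -/
def boundaryFinset (G : SimpleGraph V) : Finset V := univ.filter (fun v => IsBoundary G v)

/-- The degree sequence of `G`, as a multiset. -/
def degreeMultiset (G : SimpleGraph V) : Multiset ℕ := Finset.univ.val.map (fun v => G.degree v)

/-- The graph Laplacian `Δ = D - A` applied to a function `f : V → ℝ`. -/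
def lapApply (G : SimpleGraph V) (f : V → ℝ) (v : V) : ℝ :=
  (G.degree v : ℝ) * f v - ∑ w ∈ G.neighborFinset v, f w

/-- `f` (vanishing on the boundary, nonzero) is an eigenfunction of the
Dirichlet operator `Δ₀` with eigenvalue `μ`: the eigenvalue equation holds at
every interior vertex. -/
def IsDirichletEigenpair (G : SimpleGraph V) (μ : ℝ) (f : V → ℝ) : Prop :=
  f ≠ 0 ∧ (∀ v, IsBoundary G v → f v = 0) ∧
    ∀ v, IsInterior G v → lapApply G f v = μ * f v

/-- The first (smallest) Dirichlet eigenvalue `λ(G)`. -/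
def dirichletLambda (G : SimpleGraph V) : ℝ :=
  sInf {μ : ℝ | ∃ f : V → ℝ, IsDirichletEigenpair G μ f}

/-- The quadratic form `⟨Δ f, f⟩ = Σ_{(u,v)∈E} (f u - f v)²` of the Laplacian
(each edge counted once). -/
def quadForm (G : SimpleGraph V) (f : V → ℝ) : ℝ :=
  (∑ v, ∑ w ∈ G.neighborFinset v, (f v - f w) ^ 2) / 2

/-- The Rayleigh quotient `R_G(f)`. -/
def rayleigh (G : SimpleGraph V) (f : V → ℝ) : ℝ :=
  quadForm G f / ∑ v, f v ^ 2

/-- `w` is a child of `v` in the tree `G` rooted at `v₀`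
(heights are distances from the root `v₀`). -/
def IsChild (G : SimpleGraph V) (v₀ v w : V) : Prop :=
  G.Adj v w ∧ G.dist v₀ w = G.dist v₀ v + 1

/-- A spiral-like ordering (SLO-ordering) of the vertices of the tree `G`
rooted at `v₀`: a (strict) well-ordering `lt` satisfying (S1)-(S3). -/
def IsSLOOrdering (G : SimpleGraph V) (v₀ : V) (lt : V → V → Prop) : Prop :=
  IsStrictTotalOrder V lt ∧
  (∀ v w, lt v w → G.dist v₀ v ≤ G.dist v₀ w) ∧
  (∀ v₁ v₂ w₁ w₂, lt v₁ v₂ → IsChild G v₀ v₁ w₁ → IsChild G v₀ v₂ w₂ → lt w₁ w₂) ∧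
  (∀ v w, lt v w → IsBoundary G v → IsBoundary G w)

/-- A spiral-like ordering with increasing degrees (SLO*-ordering):
additionally (S4). -/
def IsSLOStarOrdering (G : SimpleGraph V) (v₀ : V) (lt : V → V → Prop) : Prop :=
  IsSLOOrdering G v₀ lt ∧
  ∀ v w, lt v w → IsInterior G v → IsInterior G w → G.degree v ≤ G.degree w

/-- An SLO-tree: a tree with boundary admitting an SLO-ordering. -/
def IsSLOTree (G : SimpleGraph V) : Prop :=
  IsTreeWithBoundary G ∧ ∃ (v₀ : V) (lt : V → V → Prop), IsSLOOrdering G v₀ lt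

/-- An SLO*-tree: a tree with boundary admitting an SLO*-ordering. -/
def IsSLOStarTree (G : SimpleGraph V) : Prop :=
  IsTreeWithBoundary G ∧ ∃ (v₀ : V) (lt : V → V → Prop), IsSLOStarOrdering G v₀ lt

end FK

namespace FK

/-- The graph obtained from `G` by *switching*: the edges `(v₁,u₁)` and
`(v₂,u₂)` are replaced by the edges `(v₁,v₂)` and `(u₁,u₂)`. -/
def switchGraph {V : Type*} (G : SimpleGraph V) (v₁ u₁ v₂ u₂ : V) : SimpleGraph V :=
  SimpleGraph.fromEdgeSet ((G.edgeSet \ {s(v₁, u₁), s(v₂, u₂)}) ∪ {s(v₁, v₂), s(u₁, u₂)})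

section Walks

variable {V : Type*} {G H : SimpleGraph V}

lemma reachable_of_adj_le_reachable (h : G.Adj ≤ H.Reachable) : G.Reachable ≤ H.Reachable := by
  simp only [SimpleGraph.reachable_eq_reflTransGen] at h ⊢
  exact Relation.reflTransGen_closed h

lemma dist_add_dist_le_length {u v x : V} (p : G.Walk u v) (hx : x ∈ p.support) :
    G.dist u x + G.dist x v ≤ p.length := by
  rw [← p.take_spec hx, SimpleGraph.Walk.length_append]
  exact add_le_add (SimpleGraph.dist_le _) (SimpleGraph.dist_le _)

end Walks

/-- The squared difference `(f a - f b)²` along the unordered pair `s(a, b)`, which is the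
contribution of an edge to the quadratic form of the Laplacian. -/
def sqDiff {V : Type*} (f : V → ℝ) : Sym2 V → ℝ :=
  Sym2.lift ⟨fun a b => (f a - f b) ^ 2, fun _ _ => sub_sq_comm _ _⟩

section EdgeSums

variable {V M : Type*} [Fintype V] [AddCommMonoid M]

lemma degree_eq_sum_edgeFinset (G : SimpleGraph V) (v : V) :
    G.degree v = ∑ e ∈ G.edgeFinset, if v ∈ e then 1 else 0 := by
  rw [← G.card_incidenceFinset_eq_degree, G.incidenceFinset_eq_filter, card_filter]

lemma sum_neighborFinset_eq_sum_incidenceFinset (G : SimpleGraph V) (v : V) (w : Sym2 V → M) :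
    ∑ x ∈ G.neighborFinset v, w s(v, x) = ∑ e ∈ G.incidenceFinset v, w e := by
  have himage : G.incidenceFinset v = (G.neighborFinset v).image (s(v, ·)) := by
    ext e
    induction e with
    | _ x y =>
      simp only [SimpleGraph.mem_incidenceFinset, SimpleGraph.mk'_mem_incidenceSet_iff, mem_image,
        SimpleGraph.mem_neighborFinset, Sym2.eq_iff]
      grind [G.adj_comm]
  rw [himage, sum_image fun _ _ _ _ => Sym2.congr_right.1]

lemma sum_sum_neighborFinset (G : SimpleGraph V) (w : Sym2 V → M) :
    ∑ v, ∑ x ∈ G.neighborFinset v, w s(v, x) = 2 • ∑ e ∈ G.edgeFinset, w e := by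
  calc ∑ v, ∑ x ∈ G.neighborFinset v, w s(v, x)
      = ∑ v, ∑ e ∈ G.incidenceFinset v, w e :=
        sum_congr rfl fun v _ => sum_neighborFinset_eq_sum_incidenceFinset G v w
    _ = ∑ e ∈ G.edgeFinset, ∑ _v ∈ e.toFinset, w e :=
        sum_comm' fun v e => by simp [SimpleGraph.incidenceFinset_eq_filter, and_comm]
    _ = ∑ e ∈ G.edgeFinset, 2 • w e := sum_congr rfl fun e he => by
        rw [sum_const, Sym2.card_toFinset_of_not_isDiag e
          (G.not_isDiag_of_mem_edgeSet (SimpleGraph.mem_edgeFinset.1 he))]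
    _ = 2 • ∑ e ∈ G.edgeFinset, w e := sum_nsmul ..

lemma quadForm_eq_sum_edgeFinset (G : SimpleGraph V) (f : V → ℝ) :
    quadForm G f = ∑ e ∈ G.edgeFinset, sqDiff f e := by
  have h : ∑ v, ∑ x ∈ G.neighborFinset v, (f v - f x) ^ 2 = 2 • ∑ e ∈ G.edgeFinset, sqDiff f e :=
    sum_sum_neighborFinset G (sqDiff f)
  rw [quadForm, h, nsmul_eq_mul, Nat.cast_ofNat, mul_div_cancel_left₀ _ two_ne_zero]

end EdgeSums

section SameDegrees

variable {V : Type*} [Fintype V] {G H : SimpleGraph V}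

lemma card_edgeFinset_of_degree_eq (hdeg : ∀ v, H.degree v = G.degree v) :
    #H.edgeFinset = #G.edgeFinset := by
  have hsum := H.sum_degrees_eq_twice_card_edges
  simp only [hdeg, G.sum_degrees_eq_twice_card_edges] at hsum
  omega

lemma isTree_of_connected_of_degree_eq (hG : G.IsTree) (hH : H.Connected)
    (hdeg : ∀ v, H.degree v = G.degree v) : H.IsTree := by
  rw [SimpleGraph.isTree_iff_connected_and_card, Nat.card_eq_fintype_card,
    ← SimpleGraph.edgeFinset_card] at hG ⊢
  exact ⟨hH, card_edgeFinset_of_degree_eq hdeg ▸ hG.2⟩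

lemma IsTreeWithBoundary.of_degree_eq (hG : IsTreeWithBoundary G) (hH : H.Connected)
    (hdeg : ∀ v, H.degree v = G.degree v) : IsTreeWithBoundary H := by
  simpa only [IsTreeWithBoundary, IsInterior, IsBoundary, hdeg] using
    ⟨isTree_of_connected_of_degree_eq hG.1 hH hdeg, hG.2⟩

lemma degreeMultiset_congr (hdeg : ∀ v, H.degree v = G.degree v) :
    degreeMultiset H = degreeMultiset G := by
  simp only [degreeMultiset, hdeg]

lemma isBoundary_congr {v : V} (hdeg : H.degree v = G.degree v) :
    IsBoundary H v ↔ IsBoundary G v := by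
  rw [IsBoundary, IsBoundary, hdeg]

end SameDegrees

section Connectivity

variable {V : Type*} {G : SimpleGraph V} {v₁ u₁ v₂ u₂ : V}

lemma deleteEdges_le_switchGraph :
    G.deleteEdges {s(v₁, u₁), s(v₂, u₂)} ≤ switchGraph G v₁ u₁ v₂ u₂ := by
  rw [← SimpleGraph.fromEdgeSet_edgeSet (G.deleteEdges _), SimpleGraph.edgeSet_deleteEdges]
  exact SimpleGraph.fromEdgeSet_mono Set.subset_union_left

lemma switchGraph_of_eq (h₁ : G.Adj v₁ u₁) (h₂ : G.Adj v₂ v₁) :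
    switchGraph G v₁ u₁ v₂ v₁ = G := by
  have hsub : ({s(v₁, v₂), s(u₁, v₁)} : Set (Sym2 V)) ⊆ G.edgeSet :=
    Set.pair_subset h₂.symm h₁.symm
  rw [switchGraph, Sym2.eq_swap (a := v₁) (b := u₁), Sym2.eq_swap (a := v₂) (b := v₁),
    Set.pair_comm s(u₁, v₁), Set.sdiff_union_of_subset hsub, SimpleGraph.fromEdgeSet_edgeSet]

lemma switchGraph_connected (hG : G.Connected) (hv : v₁ ≠ v₂) (hu : u₁ ≠ u₂)
    (hpath : (G.deleteEdges {s(v₁, u₁), s(v₂, u₂)}).Reachable v₁ u₂) :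
    (switchGraph G v₁ u₁ v₂ u₂).Connected := by
  have hvv : (switchGraph G v₁ u₁ v₂ u₂).Reachable v₁ v₂ :=
    SimpleGraph.Adj.reachable (by simp [switchGraph, hv])
  have huu : (switchGraph G v₁ u₁ v₂ u₂).Reachable u₁ u₂ :=
    SimpleGraph.Adj.reachable (by simp [switchGraph, hu])
  have hvu := hpath.mono deleteEdges_le_switchGraph
  have hadj : G.Adj ≤ (switchGraph G v₁ u₁ v₂ u₂).Reachable := by
    intro x y hxy
    by_cases hrem : s(x, y) ∈ ({s(v₁, u₁), s(v₂, u₂)} : Set (Sym2 V))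
    · have hvu₁ := hvu.trans huu.symm
      have hvu₂ := hvv.symm.trans hvu
      simp only [Set.mem_insert_iff, Set.mem_singleton_iff, Sym2.eq_iff] at hrem
      rcases hrem with (⟨rfl, rfl⟩ | ⟨rfl, rfl⟩) | ⟨rfl, rfl⟩ | ⟨rfl, rfl⟩
      exacts [hvu₁, hvu₁.symm, hvu₂, hvu₂.symm]
    · exact (deleteEdges_le_switchGraph (SimpleGraph.deleteEdges_adj.2 ⟨hxy, hrem⟩)).reachable
  have := hG.nonempty
  exact ⟨fun x y => reachable_of_adj_le_reachable hadj x y (hG x y)⟩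

lemma reachable_deleteEdges_of_geodesic (hG : G.Connected) (hne : u₂ ≠ v₂)
    (hu₂ : G.dist v₁ u₂ + G.dist u₂ v₂ = G.dist v₁ v₂)
    (hu₁ : G.dist v₁ u₁ + G.dist u₁ v₂ ≠ G.dist v₁ v₂) :
    (G.deleteEdges {s(v₁, u₁), s(v₂, u₂)}).Reachable v₁ u₂ := by
  obtain ⟨p, hp⟩ := hG.exists_walk_length_eq_dist v₁ u₂
  have hu₁p : u₁ ∉ p.support := by
    intro hmem
    have := dist_add_dist_le_length p hmem
    have := hG.dist_triangle (u := u₁) (v := u₂) (w := v₂)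
    have := hG.dist_triangle (u := v₁) (v := u₁) (w := v₂)
    omega
  have hv₂p : v₂ ∉ p.support := by
    intro hmem
    have := dist_add_dist_le_length p hmem
    have := hG.pos_dist_of_ne hne
    omega
  refine ⟨p.toDeleteEdges _ ?_⟩
  rintro e he (rfl | rfl)
  · exact hu₁p (p.snd_mem_support_of_mem_edges he)
  · exact hv₂p (p.fst_mem_support_of_mem_edges he)

end Connectivity

/-- The vertices `v₁, u₁, v₂, u₂` admit a *2-switch* in `G`: the edges `(v₁,u₁)`, `(v₂,u₂)` of `G`
can be exchanged for the non-edges `(v₁,v₂)`, `(u₁,u₂)`, neither of which is a loop. -/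
structure IsTwoSwitch {V : Type*} (G : SimpleGraph V) (v₁ u₁ v₂ u₂ : V) : Prop where
  adj₁ : G.Adj v₁ u₁
  adj₂ : G.Adj v₂ u₂
  ne_v : v₁ ≠ v₂
  ne_u : u₁ ≠ u₂
  not_adj_v : ¬ G.Adj v₁ v₂
  not_adj_u : ¬ G.Adj u₁ u₂

namespace IsTwoSwitch

variable {V : Type*} {G : SimpleGraph V} {v₁ u₁ v₂ u₂ : V}

lemma of_geodesic (hG : G.Connected) (htri : G.CliqueFree 3)
    (h₁ : G.Adj v₁ u₁) (h₂ : G.Adj v₂ u₂) (hne : v₁ ≠ u₂)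
    (hu₂ : G.dist v₁ u₂ + G.dist u₂ v₂ = G.dist v₁ v₂)
    (hu₁ : G.dist v₁ u₁ + G.dist u₁ v₂ ≠ G.dist v₁ v₂) :
    IsTwoSwitch G v₁ u₁ v₂ u₂ := by
  have hd₁ : G.dist v₁ u₁ = 1 := SimpleGraph.dist_eq_one_iff_adj.2 h₁
  have hd₂ : G.dist u₂ v₂ = 1 := SimpleGraph.dist_eq_one_iff_adj.2 h₂.symm
  have hpos := hG.pos_dist_of_ne hne
  refine ⟨h₁, h₂, ?_, ?_, fun hadj => ?_, fun hadj => ?_⟩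
  · rintro rfl
    rw [SimpleGraph.dist_self] at hu₂
    omega
  · rintro rfl
    exact hu₁ hu₂
  · have := SimpleGraph.dist_eq_one_iff_adj.2 hadj
    omega
  · have hd := SimpleGraph.dist_eq_one_iff_adj.2 hadj
    have := hG.dist_triangle (u := u₁) (v := u₂) (w := v₂)
    have := hG.dist_triangle (u := v₁) (v := u₁) (w := v₂)
    have hd₁₂ : G.dist v₁ u₂ = 1 := by omega
    exact htri _ (SimpleGraph.is3Clique_triple_iff.2
      ⟨h₁, SimpleGraph.dist_eq_one_iff_adj.1 hd₁₂, hadj⟩)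

variable (h : IsTwoSwitch G v₁ u₁ v₂ u₂)
include h

lemma removed_ne : s(v₁, u₁) ≠ s(v₂, u₂) := by
  intro heq
  rcases Sym2.eq_iff.1 heq with ⟨hv, -⟩ | ⟨-, rfl⟩
  exacts [h.ne_v hv, h.not_adj_v h.adj₁]

lemma added_ne : s(v₁, v₂) ≠ s(u₁, u₂) := by
  intro heq
  rcases Sym2.eq_iff.1 heq with ⟨hvu, -⟩ | ⟨-, rfl⟩
  exacts [h.adj₁.ne hvu, h.not_adj_v h.adj₁]

variable [Fintype V]

lemma edgeFinset_switchGraph : (switchGraph G v₁ u₁ v₂ u₂).edgeFinset =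
    (G.edgeFinset \ {s(v₁, u₁), s(v₂, u₂)}) ∪ {s(v₁, v₂), s(u₁, u₂)} := by
  have hloop : Disjoint ((G.edgeSet \ {s(v₁, u₁), s(v₂, u₂)}) ∪ {s(v₁, v₂), s(u₁, u₂)})
      Sym2.diagSet := by
    rw [← Set.subset_compl_iff_disjoint_right]
    exact Set.union_subset (Set.sdiff_subset.trans G.edgeSet_subset_compl_diagSet)
      (Set.pair_subset h.ne_v h.ne_u)
  rw [← coe_inj, SimpleGraph.coe_edgeFinset, switchGraph, SimpleGraph.edgeSet_fromEdgeSet,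
    hloop.sdiff_eq_left]
  push_cast
  rfl

lemma sum_edgeFinset_switchGraph {M : Type*} [AddCommMonoid M] (w : Sym2 V → M) :
    ∑ e ∈ (switchGraph G v₁ u₁ v₂ u₂).edgeFinset, w e + (w s(v₁, u₁) + w s(v₂, u₂)) =
      ∑ e ∈ G.edgeFinset, w e + (w s(v₁, v₂) + w s(u₁, u₂)) := by
  have hsub : {s(v₁, u₁), s(v₂, u₂)} ⊆ G.edgeFinset := by
    simp [insert_subset_iff, h.adj₁, h.adj₂]
  have hdisj : Disjoint (G.edgeFinset \ {s(v₁, u₁), s(v₂, u₂)}) {s(v₁, v₂), s(u₁, u₂)} := by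
    simp [h.not_adj_v, h.not_adj_u]
  rw [h.edgeFinset_switchGraph, sum_union hdisj, sum_pair h.added_ne, ← sum_pair h.removed_ne,
    add_right_comm, sum_sdiff hsub]

lemma degree_switchGraph (v : V) : (switchGraph G v₁ u₁ v₂ u₂).degree v = G.degree v := by
  have hsum := h.sum_edgeFinset_switchGraph fun e => if v ∈ e then 1 else 0
  rw [← degree_eq_sum_edgeFinset, ← degree_eq_sum_edgeFinset] at hsum
  have hend {a b : V} (hab : a ≠ b) : (if v ∈ s(a, b) then 1 else 0) =
      (if v = a then 1 else 0) + (if v = b then 1 else 0) := by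
    simp only [Sym2.mem_iff]
    grind
  rw [hend h.adj₁.ne, hend h.adj₂.ne, hend h.ne_v, hend h.ne_u] at hsum
  omega

lemma quadForm_switchGraph (f : V → ℝ) : quadForm (switchGraph G v₁ u₁ v₂ u₂) f =
    quadForm G f - 2 * ((f v₁ - f u₂) * (f v₂ - f u₁)) := by
  have hsum := h.sum_edgeFinset_switchGraph (sqDiff f)
  rw [← quadForm_eq_sum_edgeFinset, ← quadForm_eq_sum_edgeFinset] at hsum
  simp only [sqDiff, Sym2.lift_mk] at hsum
  linear_combination hsum

end IsTwoSwitch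

theorem switching_general {V : Type*} [Fintype V] {G : SimpleGraph V} (hG : G.Connected)
    (htri : G.CliqueFree 3) {v₁ u₁ v₂ u₂ : V} (h₁ : G.Adj v₁ u₁) (h₂ : G.Adj v₂ u₂)
    (hu₂ : G.dist v₁ u₂ + G.dist u₂ v₂ = G.dist v₁ v₂)
    (hu₁ : G.dist v₁ u₁ + G.dist u₁ v₂ ≠ G.dist v₁ v₂) :
    (switchGraph G v₁ u₁ v₂ u₂).Connected ∧
    (∀ v, (switchGraph G v₁ u₁ v₂ u₂).degree v = G.degree v) ∧
    ∀ f : V → ℝ, f u₂ ≤ f v₁ → f u₁ ≤ f v₂ →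
      (quadForm (switchGraph G v₁ u₁ v₂ u₂) f ≤ quadForm G f ∧
        (f u₂ < f v₁ → f u₁ < f v₂ →
          quadForm (switchGraph G v₁ u₁ v₂ u₂) f < quadForm G f)) := by
  obtain rfl | hne := eq_or_ne v₁ u₂
  · rw [switchGraph_of_eq h₁ h₂]
    exact ⟨hG, fun _ => rfl, fun _ _ _ => ⟨le_rfl, fun hlt => absurd hlt (lt_irrefl _)⟩⟩
  · have hswitch := IsTwoSwitch.of_geodesic hG htri h₁ h₂ hne hu₂ hu₁
    have hpath := reachable_deleteEdges_of_geodesic hG h₂.ne' hu₂ hu₁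
    refine ⟨switchGraph_connected hG hswitch.ne_v hswitch.ne_u hpath,
      hswitch.degree_switchGraph, fun f hv hu => ?_⟩
    rw [hswitch.quadForm_switchGraph f, sub_le_self_iff, sub_lt_self_iff]
    exact ⟨mul_nonneg two_pos.le (mul_nonneg (sub_nonneg.2 hv) (sub_nonneg.2 hu)),
      fun hv' hu' => mul_pos two_pos (mul_pos (sub_pos.2 hv') (sub_pos.2 hu'))⟩

/-- **Lemma (Switching).** Let `G` be a tree with boundary, `(v₁,u₁)` and
`(v₂,u₂)` edges such that `u₂` lies on the geodesic path from `v₁` to `v₂` but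
`u₁` does not. Then the switched graph `G'` is again a tree with boundary with
the same degree sequence and the same boundary vertices, and for every function
`f` vanishing on the boundary with `f v₁ ≥ f u₂` and `f v₂ ≥ f u₁` one has
`⟨Δ(G')f, f⟩ ≤ ⟨Δ(G)f, f⟩`, strictly if both inequalities are strict. -/
theorem switching {V : Type*} [Fintype V] [DecidableEq V]
    (G : SimpleGraph V) (hG : IsTreeWithBoundary G) (v₁ u₁ v₂ u₂ : V)
    (h₁ : G.Adj v₁ u₁) (h₂ : G.Adj v₂ u₂)
    (hu₂ : G.dist v₁ u₂ + G.dist u₂ v₂ = G.dist v₁ v₂)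
    (hu₁ : G.dist v₁ u₁ + G.dist u₁ v₂ ≠ G.dist v₁ v₂) :
    IsTreeWithBoundary (switchGraph G v₁ u₁ v₂ u₂) ∧
    degreeMultiset (switchGraph G v₁ u₁ v₂ u₂) = degreeMultiset G ∧
    (∀ v, IsBoundary (switchGraph G v₁ u₁ v₂ u₂) v ↔ IsBoundary G v) ∧
    ∀ f : V → ℝ, (∀ v, IsBoundary G v → f v = 0) →
      f u₂ ≤ f v₁ → f u₁ ≤ f v₂ →
      (quadForm (switchGraph G v₁ u₁ v₂ u₂) f ≤ quadForm G f ∧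
        (f u₂ < f v₁ → f u₁ < f v₂ →
          quadForm (switchGraph G v₁ u₁ v₂ u₂) f < quadForm G f)) := by
  obtain ⟨hconn, hdeg, hform⟩ :=
    switching_general hG.1.connected (hG.1.isAcyclic.cliqueFree le_rfl) h₁ h₂ hu₂ hu₁
  exact ⟨hG.of_degree_eq hconn hdeg, degreeMultiset_congr hdeg,
    fun v => isBoundary_congr (hdeg v), fun f _ => hform f⟩

end FK
end
end

section
/- Let G(V,E) be a tree with boundary with degree sequence π. Then there exists an SLO-tree G'(V,E') in the class T_π with λ(G') ≤ λ(G). Furthermore, if G has the Faber-Krahn property in T_π, then G itself admits an SLO-ordering ≺ of its vertices, and if f is a non-negative eigenfunction to λ(G) (extended by 0 on the boundary) then v ≺ w implies f(v) ≥ f(w). -/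
/-!
Common definitions for Faber-Krahn type inequalities for trees
(Bıyıkoğlu–Leydold, "Faber-Krahn Type Inequalities for Trees").

A *tree (graph) with boundary* is a finite simple connected graph in which
boundary vertices are exactly the vertices of degree 1 and interior vertices
are the vertices of degree ≥ 2; both sets are required to be nonempty.
The Dirichlet operator is the Laplacian restricted to functions vanishing on
the boundary; `dirichletLambda` is its smallest eigenvalue.
-/

open Finset
open scoped Classical

noncomputable section

/-!
The class of trees with a given degree sequence on a fixed vertex set is finite, so `λ` has a
minimizer in it, and the first half of the theorem follows from the second.

Let `G` be a minimizer. It has a non-negative eigenfunction `f` to `λ(G)`, which is positive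
exactly on the interior and unique up to scaling. For a path `a₁ n₁ ⋯ n₂ a₂` in `G` with `n₁ ≠ n₂`,
replacing the edges `a₁n₁`, `a₂n₂` by `a₁n₂`, `a₂n₁` yields a tree with the same degrees, and
changes the quadratic form of `f` by `-2 (f a₁ - f a₂) (f n₂ - f n₁)`. By minimality this change
cannot be negative, and if it vanishes then `f` is an eigenfunction of the new tree as well, so
comparing the eigenvalue equations at `n₁` and at `a₁` gives `f a₁ = f a₂`, and `f n₁ = f n₂` if
`a₁` is interior. Consequently `f n₁ ≤ f n₂` implies `f a₁ ≤ f a₂`, strictly if `f n₁ < f n₂` and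
`a₁` is interior.

Root `G` at a maximum of `f`. An ancestor `a` of `b` has `f a ≥ f b`: otherwise the strict
inequality passes to the parent of `a` and a child of `b`, and eventually contradicts the maximality
at the root. By induction on the height, the values of `f` on each level dominate those on all
deeper ones. Now order the vertices breadth-first, with siblings ordered by decreasing `f`.
Conditions (S1) and (S2) are built in, and the switching inequality shows, level by level, that `f`
is non-increasing along the ordering. As `f` is positive exactly on the interior, (S3) follows.
-/

namespace FK

open SimpleGraph
open scoped Matrix

section HermitianMatrix

variable {n : Type*} [Fintype n] [DecidableEq n] {A : Matrix n n ℝ} {m : ℝ} {x : n → ℝ}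

lemma posSemidef_sub_smul_one (hA : A.IsHermitian) (hm : ∀ μ ∈ spectrum ℝ A, m ≤ μ) :
    (A - m • (1 : Matrix n n ℝ)).PosSemidef := by
  refine Matrix.posSemidef_iff_isHermitian_and_spectrum_nonneg.2
    ⟨hA.sub (by simp [Matrix.IsHermitian]), ?_⟩
  rw [← Algebra.algebraMap_eq_smul_one, ← spectrum.sub_singleton_eq, Set.sub_singleton]
  rintro _ ⟨μ, hμ, rfl⟩
  exact sub_nonneg.2 (hm μ hμ)

lemma dotProduct_sub_smul_one_mulVec (A : Matrix n n ℝ) (m : ℝ) (x : n → ℝ) :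
    star x ⬝ᵥ ((A - m • (1 : Matrix n n ℝ)) *ᵥ x) = x ⬝ᵥ (A *ᵥ x) - m * (x ⬝ᵥ x) := by
  rw [star_trivial, Matrix.sub_mulVec, Matrix.smul_mulVec, Matrix.one_mulVec, dotProduct_sub,
    dotProduct_smul, smul_eq_mul]

theorem mul_dotProduct_self_le (hA : A.IsHermitian) (hm : ∀ μ ∈ spectrum ℝ A, m ≤ μ)
    (x : n → ℝ) : m * (x ⬝ᵥ x) ≤ x ⬝ᵥ (A *ᵥ x) := by
  have h := (posSemidef_sub_smul_one hA hm).dotProduct_mulVec_nonneg x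
  rw [dotProduct_sub_smul_one_mulVec] at h
  exact sub_nonneg.1 h

theorem mulVec_eq_smul_of_dotProduct_le (hA : A.IsHermitian) (hm : ∀ μ ∈ spectrum ℝ A, m ≤ μ)
    (hx : x ⬝ᵥ (A *ᵥ x) ≤ m * (x ⬝ᵥ x)) : A *ᵥ x = m • x := by
  have h := ((posSemidef_sub_smul_one hA hm).dotProduct_mulVec_zero_iff x).1 <| by
    rw [dotProduct_sub_smul_one_mulVec, hx.antisymm (mul_dotProduct_self_le hA hm x), sub_self]
  rwa [Matrix.sub_mulVec, Matrix.smul_mulVec, Matrix.one_mulVec, sub_eq_zero] at h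

end HermitianMatrix

section DirichletOperator

variable {V : Type*} [Fintype V] {G : SimpleGraph V} {f g : V → ℝ} {μ : ℝ}

lemma isBoundary_or_isInterior (hG : IsTreeWithBoundary G) (v : V) :
    IsBoundary G v ∨ IsInterior G v := by
  obtain ⟨hT, ⟨u, hu⟩, -⟩ := hG
  have : Nontrivial V := by
    obtain ⟨x, hx⟩ := (G.degree_pos_iff_exists_adj u).1 (zero_lt_two.trans_le hu)
    exact ⟨u, x, hx.ne⟩
  have hpos : 0 < G.degree v := hT.connected.preconnected.degree_pos_of_nontrivial v
  unfold IsBoundary IsInterior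
  omega

lemma IsInterior.not_isBoundary {v : V} (hv : IsInterior G v) : ¬ IsBoundary G v := by
  unfold IsInterior IsBoundary at *
  omega

/-- The Dirichlet operator `Δ₀(G)`: the Laplacian matrix with the rows and columns of all
non-interior vertices deleted. -/
def dirichletMatrix (G : SimpleGraph V) :
    Matrix {v // IsInterior G v} {v // IsInterior G v} ℝ :=
  (G.lapMatrix ℝ).submatrix Subtype.val Subtype.val

lemma isHermitian_dirichletMatrix : (dirichletMatrix G).IsHermitian :=
  (G.isHermitian_lapMatrix ℝ).submatrix _

lemma lapMatrix_mulVec (G : SimpleGraph V) (f : V → ℝ) :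
    G.lapMatrix ℝ *ᵥ f = lapApply G f :=
  funext fun v => G.lapMatrix_mulVec_apply v f

lemma lapApply_smul (G : SimpleGraph V) (c : ℝ) (f : V → ℝ) :
    lapApply G (c • f) = c • lapApply G f := by
  simp only [← lapMatrix_mulVec, Matrix.mulVec_smul]

lemma lapApply_sub (G : SimpleGraph V) (f g : V → ℝ) :
    lapApply G (f - g) = lapApply G f - lapApply G g := by
  simp only [← lapMatrix_mulVec, Matrix.mulVec_sub]

lemma quadForm_eq_dotProduct (G : SimpleGraph V) (f : V → ℝ) :
    quadForm G f = f ⬝ᵥ lapApply G f := by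
  rw [← lapMatrix_mulVec, ← Matrix.toLinearMap₂'_apply', G.lapMatrix_toLinearMap₂' ℝ]
  simp only [quadForm, ← Finset.sum_filter, SimpleGraph.neighborFinset_eq_filter]

lemma sum_interior (h : ∀ v, ¬ IsInterior G v → g v = 0) :
    ∑ v : {v // IsInterior G v}, g v = ∑ v, g v :=
  Fintype.sum_of_injective _ Subtype.val_injective _ _
    (fun v hv => h v fun hi => hv ⟨⟨v, hi⟩, rfl⟩) fun _ => rfl

lemma dirichletMatrix_mulVec (hf : ∀ v, ¬ IsInterior G v → f v = 0) :
    (dirichletMatrix G *ᵥ fun v => f v) = fun v : {v // IsInterior G v} => lapApply G f v := by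
  funext v
  rw [← lapMatrix_mulVec]
  exact sum_interior (g := fun w => G.lapMatrix ℝ v w * f w) fun w hw => by rw [hf w hw, mul_zero]

lemma eq_zero_of_not_isInterior (hG : IsTreeWithBoundary G) (hf : ∀ v, IsBoundary G v → f v = 0)
    (v : V) (hv : ¬ IsInterior G v) : f v = 0 :=
  hf v ((isBoundary_or_isInterior hG v).resolve_right hv)

lemma setOf_isDirichletEigenpair (hG : IsTreeWithBoundary G) :
    {μ | ∃ f, IsDirichletEigenpair G μ f} = spectrum ℝ (dirichletMatrix G) := by
  ext μ
  rw [← Matrix.spectrum_toLin', ← Module.End.hasEigenvalue_iff_mem_spectrum]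
  constructor
  · rintro ⟨f, hne, hb, hlap⟩
    have h0 := eq_zero_of_not_isInterior hG hb
    refine Module.End.hasEigenvalue_of_hasEigenvector (x := fun w => f w)
      ⟨Module.End.mem_eigenspace_iff.2 <| funext fun v => ?_, fun h => hne <| funext fun v => ?_⟩
    · exact (congrFun (dirichletMatrix_mulVec h0) v).trans (hlap v v.2)
    · by_cases hv : IsInterior G v
      · exact congrFun h ⟨v, hv⟩
      · exact h0 v hv
  · intro h
    obtain ⟨x, hx, hne⟩ := h.exists_hasEigenvector
    let f : V → ℝ := Function.extend Subtype.val x 0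
    have hfx (v : {v // IsInterior G v}) : f v = x v := Subtype.val_injective.extend_apply _ _ v
    have h0 (v : V) (hv : ¬ IsInterior G v) : f v = 0 :=
      Function.extend_apply' _ _ _ fun ⟨w, hw⟩ => hv (hw ▸ w.2)
    refine ⟨f, fun h => hne <| funext fun v => ?_, fun v hv => h0 v fun hi => hi.not_isBoundary hv,
      fun v hv => ?_⟩
    · rw [← hfx v, h]; rfl
    · have hμ := congrFun (Module.End.mem_eigenspace_iff.1 hx) ⟨v, hv⟩
      rw [← congrFun (dirichletMatrix_mulVec h0) ⟨v, hv⟩, hfx ⟨v, hv⟩]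
      simpa only [hfx, Matrix.toLin'_apply, Pi.smul_apply, smul_eq_mul] using hμ

lemma dirichletLambda_eq (hG : IsTreeWithBoundary G) :
    dirichletLambda G = sInf (spectrum ℝ (dirichletMatrix G)) :=
  congrArg sInf (setOf_isDirichletEigenpair hG)

lemma exists_isDirichletEigenpair (hG : IsTreeWithBoundary G) :
    ∃ f, IsDirichletEigenpair G (dirichletLambda G) f := by
  have : Nonempty {v // IsInterior G v} := nonempty_subtype.2 hG.2.1
  have hne : (spectrum ℝ (dirichletMatrix G)).Nonempty :=
    (isHermitian_dirichletMatrix (G := G)).spectrum_real_eq_range_eigenvalues ▸ Set.range_nonempty _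
  have hmem := hne.csInf_mem (dirichletMatrix G).finite_real_spectrum
  rwa [← dirichletLambda_eq hG, ← setOf_isDirichletEigenpair hG] at hmem

lemma le_of_mem_spectrum (hG : IsTreeWithBoundary G) :
    ∀ x ∈ spectrum ℝ (dirichletMatrix G), dirichletLambda G ≤ x := fun _ hx =>
  (dirichletLambda_eq hG).trans_le (csInf_le (dirichletMatrix G).finite_real_spectrum.bddBelow hx)

lemma dotProduct_restrict (hf : ∀ v, ¬ IsInterior G v → f v = 0) (g : V → ℝ) :
    (fun v : {v // IsInterior G v} => f v) ⬝ᵥ (fun v => g v) = f ⬝ᵥ g :=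
  sum_interior (g := fun v => f v * g v) fun v hv => by rw [hf v hv, zero_mul]

lemma dotProduct_dirichletMatrix_mulVec (hf : ∀ v, ¬ IsInterior G v → f v = 0) :
    (fun v : {v // IsInterior G v} => f v) ⬝ᵥ (dirichletMatrix G *ᵥ fun v => f v) =
      quadForm G f := by
  rw [dirichletMatrix_mulVec hf, dotProduct_restrict hf, quadForm_eq_dotProduct]

theorem dirichletLambda_mul_le_quadForm (hG : IsTreeWithBoundary G)
    (hf : ∀ v, IsBoundary G v → f v = 0) :
    dirichletLambda G * (f ⬝ᵥ f) ≤ quadForm G f := by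
  have h0 := eq_zero_of_not_isInterior hG hf
  rw [← dotProduct_restrict h0, ← dotProduct_dirichletMatrix_mulVec h0]
  exact mul_dotProduct_self_le isHermitian_dirichletMatrix (le_of_mem_spectrum hG) _

theorem isDirichletEigenpair_of_quadForm_le (hG : IsTreeWithBoundary G)
    (hf : ∀ v, IsBoundary G v → f v = 0) (hne : f ≠ 0)
    (hle : quadForm G f ≤ dirichletLambda G * (f ⬝ᵥ f)) :
    IsDirichletEigenpair G (dirichletLambda G) f := by
  have h0 := eq_zero_of_not_isInterior hG hf
  rw [← dotProduct_restrict h0, ← dotProduct_dirichletMatrix_mulVec h0] at hle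
  have heq :=
    mulVec_eq_smul_of_dotProduct_le isHermitian_dirichletMatrix (le_of_mem_spectrum hG) hle
  rw [dirichletMatrix_mulVec h0] at heq
  exact ⟨hne, hf, fun v hv => congrFun heq ⟨v, hv⟩⟩

lemma IsDirichletEigenpair.quadForm_eq (hG : IsTreeWithBoundary G)
    (hf : IsDirichletEigenpair G μ f) : quadForm G f = μ * (f ⬝ᵥ f) := by
  rw [quadForm_eq_dotProduct, dotProduct, dotProduct, Finset.mul_sum]
  refine Finset.sum_congr rfl fun v _ => ?_
  rcases isBoundary_or_isInterior hG v with hv | hv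
  · rw [hf.2.1 v hv]; ring
  · rw [hf.2.2 v hv]; ring

end DirichletOperator

section NonnegativeEigenfunction

variable {V : Type*} [Fintype V] {G : SimpleGraph V} {f g : V → ℝ} {μ : ℝ}

lemma quadForm_abs_le (G : SimpleGraph V) (f : V → ℝ) : quadForm G |f| ≤ quadForm G f := by
  unfold quadForm
  gcongr ?_ / 2
  exact Finset.sum_le_sum fun v _ => Finset.sum_le_sum fun w _ =>
    sq_le_sq.2 (abs_abs_sub_abs_le_abs_sub (f v) (f w))

lemma IsDirichletEigenpair.abs (hG : IsTreeWithBoundary G)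
    (hf : IsDirichletEigenpair G (dirichletLambda G) f) :
    IsDirichletEigenpair G (dirichletLambda G) |f| := by
  refine isDirichletEigenpair_of_quadForm_le hG (fun v hv => ?_)
    (fun h => hf.1 <| funext fun v => abs_eq_zero.1 (congrFun h v)) ?_
  · rw [Pi.abs_apply, hf.2.1 v hv, abs_zero]
  · simp only [dotProduct, Pi.abs_apply, abs_mul_abs_self]
    exact (quadForm_abs_le G f).trans_eq (hf.quadForm_eq hG)

lemma eq_of_adj_of_isBoundary {v x y : V} (hv : IsBoundary G v) (hx : G.Adj v x)
    (hy : G.Adj v y) : x = y :=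
  (SimpleGraph.degree_eq_one_iff_existsUnique_adj.1 hv).unique hx hy

lemma eq_zero_of_adj_of_lapApply_eq {v w : V} (hf : ∀ x, 0 ≤ f x)
    (hlap : lapApply G f v = μ * f v) (hv : f v = 0) (hvw : G.Adj v w) : f w = 0 := by
  rw [lapApply, hv, mul_zero, mul_zero, zero_sub, neg_eq_zero,
    Finset.sum_eq_zero_iff_of_nonneg fun x _ => hf x] at hlap
  exact hlap w ((G.mem_neighborFinset v w).2 hvw)

/-- By connectedness a zero at an interior vertex would spread over the whole tree; it passes
through a boundary vertex trivially, since the only way on leads back. -/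
theorem IsDirichletEigenpair.pos_of_isInterior (hG : IsTreeWithBoundary G)
    (hf : IsDirichletEigenpair G μ f) (hnn : ∀ v, 0 ≤ f v) {v : V} (hv : IsInterior G v) :
    0 < f v := by
  refine (hnn v).lt_of_ne' fun h0 => hf.1 <| funext fun w => ?_
  have hspread {x : V} (hx : IsInterior G x) (h : f x = 0) (y : V) (hxy : G.Adj x y) : f y = 0 :=
    eq_zero_of_adj_of_lapApply_eq hnn (hf.2.2 x hx) h hxy
  suffices f w = 0 ∧ ∀ y, G.Adj w y → f y = 0 from this.1
  obtain ⟨p⟩ := hG.1.connected.preconnected w v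
  induction p with
  | nil => exact ⟨h0, hspread hv h0⟩
  | @cons a b _ hab _ ih =>
    have ⟨hb, hnb⟩ := ih hv h0
    refine ⟨hnb a hab.symm, ?_⟩
    rcases isBoundary_or_isInterior hG a with ha | ha
    · rintro y hy
      rwa [eq_of_adj_of_isBoundary ha hy hab]
    · exact hspread ha (hnb a hab.symm)

lemma IsDirichletEigenpair.pos_iff_isInterior (hG : IsTreeWithBoundary G)
    (hf : IsDirichletEigenpair G μ f) (hnn : ∀ v, 0 ≤ f v) (v : V) : 0 < f v ↔ IsInterior G v := by
  refine ⟨fun h => (isBoundary_or_isInterior hG v).resolve_left fun hb => ?_,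
    hf.pos_of_isInterior hG hnn⟩
  exact h.ne' (hf.2.1 v hb)

/-- The combination of `f` and `g` vanishing at an interior vertex is zero, for otherwise its
absolute value would be a non-negative eigenfunction with an interior zero. -/
theorem IsDirichletEigenpair.exists_eq_smul (hG : IsTreeWithBoundary G)
    (hf : IsDirichletEigenpair G (dirichletLambda G) f) (hfnn : ∀ v, 0 ≤ f v)
    (hg : IsDirichletEigenpair G (dirichletLambda G) g) (hgnn : ∀ v, 0 ≤ g v) :
    ∃ c : ℝ, 0 ≤ c ∧ g = c • f := by
  obtain ⟨u, hu⟩ := hG.2.1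
  have hfu := hf.pos_of_isInterior hG hfnn hu
  refine ⟨g u / f u, div_nonneg (hgnn u) hfu.le, ?_⟩
  by_contra hne
  have hd : IsDirichletEigenpair G (dirichletLambda G) (g - (g u / f u) • f) := by
    refine ⟨sub_ne_zero.2 hne, fun v hv => ?_, fun v hv => ?_⟩
    · simp only [Pi.sub_apply, Pi.smul_apply, hf.2.1 v hv, hg.2.1 v hv, smul_zero, sub_zero]
    · rw [lapApply_sub, lapApply_smul]
      simp only [Pi.sub_apply, Pi.smul_apply, hf.2.2 v hv, hg.2.2 v hv, smul_eq_mul]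
      ring
  refine ((hd.abs hG).pos_of_isInterior hG (fun v => abs_nonneg _) hu).ne' ?_
  simp only [Pi.abs_apply, Pi.sub_apply, Pi.smul_apply, smul_eq_mul, div_mul_cancel₀ _ hfu.ne',
    sub_self, abs_zero]

end NonnegativeEigenfunction

section NeighborSum

variable {V : Type*}

lemma sum_neighborFinset_sup {G H : SimpleGraph V} {v : V} [Fintype (G.neighborSet v)]
    [Fintype (H.neighborSet v)] [Fintype ((G ⊔ H).neighborSet v)] (h : Disjoint G H) (F : V → ℝ) :
    ∑ w ∈ (G ⊔ H).neighborFinset v, F w =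
      ∑ w ∈ G.neighborFinset v, F w + ∑ w ∈ H.neighborFinset v, F w := by
  rw [neighborFinset_sup_of_disjoint v h, Finset.sum_disjUnion]

lemma sum_neighborFinset_edge {a b v : V} [Fintype ((edge a b).neighborSet v)] (h : a ≠ b)
    (F : V → ℝ) :
    ∑ w ∈ (edge a b).neighborFinset v, F w =
      (if v = a then F b else 0) + (if v = b then F a else 0) := by
  have hmem (w : V) : w ∈ (edge a b).neighborFinset v ↔ v = a ∧ w = b ∨ v = b ∧ w = a := by
    rw [mem_neighborFinset, edge_adj]
    grind
  rcases eq_or_ne v a with rfl | ha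
  · rw [show (edge v b).neighborFinset v = {b} by ext w; simp [hmem, h]]
    simp [h]
  rcases eq_or_ne v b with rfl | hb
  · rw [show (edge a v).neighborFinset v = {a} by ext w; simp [hmem, ha]]
    simp [ha]
  · rw [show (edge a b).neighborFinset v = ∅ by ext w; simp [hmem, ha, hb]]
    simp [ha, hb]

end NeighborSum

section Switching

variable {V : Type*} {G H : SimpleGraph V} {a₁ n₁ n₂ a₂ : V}

/-- Switching: the edges `a₁n₁` and `a₂n₂` of `G` are replaced by `a₁n₂` and `a₂n₁`. -/
def switch (G : SimpleGraph V) (a₁ n₁ n₂ a₂ : V) : SimpleGraph V :=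
  G \ (edge a₁ n₁ ⊔ edge a₂ n₂) ⊔ (edge a₁ n₂ ⊔ edge a₂ n₁)

/-- The sequence `a₁ n₁ ⋯ n₂ a₂` is a path with `n₁ ≠ n₂`, so that switching its two end edges
keeps a tree connected. The inner part is given as a walk avoiding `a₁` and `a₂`; in a tree this
excludes `a₁ = a₂`. -/
structure Switchable (G : SimpleGraph V) (a₁ n₁ n₂ a₂ : V) : Prop where
  adj₁ : G.Adj a₁ n₁
  adj₂ : G.Adj a₂ n₂
  ne : n₁ ≠ n₂
  exists_walk : ∃ p : G.Walk n₁ n₂, a₁ ∉ p.support ∧ a₂ ∉ p.support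

lemma mem_support_of_adj_of_adj (hG : G.IsAcyclic) {a m n : V} (hm : G.Adj a m) (hn : G.Adj a n)
    (hne : m ≠ n) (p : G.Walk m n) : a ∈ p.support := by
  let q : G.Path m n := ⟨.cons hm.symm (.cons hn .nil), by
    simp [Walk.isPath_def, hne, hm.ne', hn.ne]⟩
  have hq : a ∈ p.bypass.support := by
    have hpq : p.bypass = q := congrArg Subtype.val <|
      (hG.subsingleton_path m n).elim ⟨p.bypass, p.bypass_isPath⟩ q
    simp [hpq, q]
  exact p.support_bypass_subset_support hq

lemma connected_of_adj_reachable (hG : G.Connected)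
    (h : ∀ x y, G.Adj x y → H.Reachable x y) : H.Connected := by
  have := hG.nonempty
  refine ⟨fun x y => ?_⟩
  obtain ⟨p⟩ := hG.preconnected x y
  induction p with
  | nil => exact .refl _
  | cons hxy _ ih => exact (h _ _ hxy).trans ih

namespace Switchable

lemma symm (h : Switchable G a₁ n₁ n₂ a₂) : Switchable G a₂ n₂ n₁ a₁ := by
  obtain ⟨p, h₁, h₂⟩ := h.exists_walk
  exact ⟨h.adj₂, h.adj₁, h.ne.symm, p.reverse, by simpa using h₂, by simpa using h₁⟩

lemma ne₁₂ (h : Switchable G a₁ n₁ n₂ a₂) : a₁ ≠ n₂ := by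
  obtain ⟨p, h₁, -⟩ := h.exists_walk
  rintro rfl
  exact h₁ p.end_mem_support

lemma not_adj₁₂ (hG : G.IsAcyclic) (h : Switchable G a₁ n₁ n₂ a₂) : ¬ G.Adj a₁ n₂ := by
  obtain ⟨p, h₁, -⟩ := h.exists_walk
  exact fun h' => h₁ (mem_support_of_adj_of_adj hG h.adj₁ h' h.ne p)

lemma ends_ne (hG : G.IsAcyclic) (h : Switchable G a₁ n₁ n₂ a₂) : a₁ ≠ a₂ := by
  rintro rfl
  exact h.not_adj₁₂ hG h.adj₂

lemma connected_switch (hG : G.Connected) (h : Switchable G a₁ n₁ n₂ a₂) :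
    (switch G a₁ n₁ n₂ a₂).Connected := by
  obtain ⟨p, h₁, h₂⟩ := h.exists_walk
  have hkeep {x y : V} (hxy : G.Adj x y) (hx : s(x, y) ≠ s(a₁, n₁)) (hy : s(x, y) ≠ s(a₂, n₂)) :
      (switch G a₁ n₁ n₂ a₂).Adj x y :=
    .inl ⟨hxy, by
      rw [sup_adj, adj_edge, adj_edge]
      exact fun h => h.elim (fun h => hx h.1.symm) fun h => hy h.1.symm⟩
  have hp : (switch G a₁ n₁ n₂ a₂).Reachable n₁ n₂ := by
    refine ⟨p.transfer _ fun e he => ?_⟩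
    induction e with | _ x y =>
    have hav {z : V} (hz : z ∉ p.support) : z ∉ s(x, y) := fun hze =>
      hz (p.mem_support_of_mem_edges he hze)
    exact hkeep (p.adj_of_mem_edges he) (fun h => hav h₁ (h ▸ Sym2.mem_mk_left _ _))
      fun h => hav h₂ (h ▸ Sym2.mem_mk_left _ _)
  have hr₁ : (switch G a₁ n₁ n₂ a₂).Reachable a₁ n₁ :=
    (Adj.reachable <| Or.inr <| .inl <| (adj_edge _ _).2 ⟨rfl, h.ne₁₂⟩).trans hp.symm
  have hr₂ : (switch G a₁ n₁ n₂ a₂).Reachable a₂ n₂ :=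
    (Adj.reachable <| Or.inr <| .inr <| (adj_edge _ _).2 ⟨rfl, h.symm.ne₁₂⟩).trans hp
  refine connected_of_adj_reachable hG fun x y hxy => ?_
  by_cases hx : s(x, y) = s(a₁, n₁)
  · rcases Sym2.eq_iff.1 hx with ⟨rfl, rfl⟩ | ⟨rfl, rfl⟩
    exacts [hr₁, hr₁.symm]
  by_cases hy : s(x, y) = s(a₂, n₂)
  · rcases Sym2.eq_iff.1 hy with ⟨rfl, rfl⟩ | ⟨rfl, rfl⟩
    exacts [hr₂, hr₂.symm]
  exact (hkeep hxy hx hy).reachable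

lemma sum_neighborFinset_switch [Fintype V] (hG : G.IsAcyclic) (h : Switchable G a₁ n₁ n₂ a₂)
    (F : V → ℝ) (v : V) :
    ∑ w ∈ (switch G a₁ n₁ n₂ a₂).neighborFinset v, F w = ∑ w ∈ G.neighborFinset v, F w
      + (if v = a₁ then F n₂ - F n₁ else 0) + (if v = n₁ then F a₂ - F a₁ else 0)
      + (if v = a₂ then F n₁ - F n₂ else 0) + (if v = n₂ then F a₁ - F a₂ else 0) := by
  have hdisj {m n : V} (hn : a₁ ≠ n) : Disjoint (edge a₁ m) (edge a₂ n) :=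
    (disjoint_edge _).2 fun hadj => by
      rcases (edge_adj ..).1 hadj with ⟨⟨ha, -⟩ | ⟨-, ha⟩, -⟩
      exacts [h.ends_ne hG ha.symm, hn ha.symm]
  have hold : edge a₁ n₁ ⊔ edge a₂ n₂ ≤ G :=
    sup_le ((edge_le_iff _).2 (.inr h.adj₁)) ((edge_le_iff _).2 (.inr h.adj₂))
  have hnew : Disjoint G (edge a₁ n₂ ⊔ edge a₂ n₁) :=
    ((disjoint_edge _).2 (h.not_adj₁₂ hG)).sup_right ((disjoint_edge _).2 (h.symm.not_adj₁₂ hG))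
  have hsum : ∑ w ∈ G.neighborFinset v, F w =
      ∑ w ∈ (G \ (edge a₁ n₁ ⊔ edge a₂ n₂) ⊔ (edge a₁ n₁ ⊔ edge a₂ n₂)).neighborFinset v, F w := by
    congr!
    exact (sdiff_sup_cancel hold).symm
  rw [hsum, switch, sum_neighborFinset_sup (hnew.mono_left sdiff_le),
    sum_neighborFinset_sup disjoint_sdiff_self_left, sum_neighborFinset_sup (hdisj h.ne₁₂),
    sum_neighborFinset_sup (hdisj h.adj₁.ne), sum_neighborFinset_edge h.adj₁.ne,
    sum_neighborFinset_edge h.adj₂.ne, sum_neighborFinset_edge h.ne₁₂,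
    sum_neighborFinset_edge h.symm.ne₁₂]
  split_ifs <;> ring

lemma degree_switch [Fintype V] (hG : G.IsAcyclic) (h : Switchable G a₁ n₁ n₂ a₂) (v : V) :
    (switch G a₁ n₁ n₂ a₂).degree v = G.degree v := by
  simpa using h.sum_neighborFinset_switch hG (fun _ => 1) v

lemma isTree_switch [Finite V] (hG : G.IsTree) (h : Switchable G a₁ n₁ n₂ a₂) :
    (switch G a₁ n₁ n₂ a₂).IsTree := by
  have := Fintype.ofFinite V
  refine isTree_iff_connected_and_card.2 ⟨h.connected_switch hG.connected, ?_⟩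
  rw [← (isTree_iff_connected_and_card.1 hG).2, Nat.card_eq_fintype_card, Nat.card_eq_fintype_card,
    ← edgeFinset_card, ← edgeFinset_card, add_left_inj, ← Nat.mul_right_inj two_ne_zero,
    ← sum_degrees_eq_twice_card_edges, ← sum_degrees_eq_twice_card_edges]
  exact Finset.sum_congr rfl fun v _ => h.degree_switch hG.isAcyclic v

variable [Fintype V]

lemma degreeMultiset_switch (hG : G.IsAcyclic) (h : Switchable G a₁ n₁ n₂ a₂) :
    degreeMultiset (switch G a₁ n₁ n₂ a₂) = degreeMultiset G := by
  simp only [degreeMultiset, h.degree_switch hG]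

lemma isBoundary_switch_iff (hG : G.IsAcyclic) (h : Switchable G a₁ n₁ n₂ a₂) (v : V) :
    IsBoundary (switch G a₁ n₁ n₂ a₂) v ↔ IsBoundary G v := by
  rw [IsBoundary, IsBoundary, h.degree_switch hG]

lemma isInterior_switch_iff (hG : G.IsAcyclic) (h : Switchable G a₁ n₁ n₂ a₂) (v : V) :
    IsInterior (switch G a₁ n₁ n₂ a₂) v ↔ IsInterior G v := by
  rw [IsInterior, IsInterior, h.degree_switch hG]

lemma isTreeWithBoundary_switch (hG : IsTreeWithBoundary G) (h : Switchable G a₁ n₁ n₂ a₂) :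
    IsTreeWithBoundary (switch G a₁ n₁ n₂ a₂) := by
  refine ⟨h.isTree_switch hG.1, ?_, ?_⟩
  · simpa only [h.isInterior_switch_iff hG.1.isAcyclic] using hG.2.1
  · simpa only [h.isBoundary_switch_iff hG.1.isAcyclic] using hG.2.2

lemma lapApply_switch (hG : G.IsAcyclic) (h : Switchable G a₁ n₁ n₂ a₂) (f : V → ℝ) (v : V) :
    lapApply (switch G a₁ n₁ n₂ a₂) f v = lapApply G f v
      - ((if v = a₁ then f n₂ - f n₁ else 0) + (if v = n₁ then f a₂ - f a₁ else 0)
      + (if v = a₂ then f n₁ - f n₂ else 0) + (if v = n₂ then f a₁ - f a₂ else 0)) := by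
  rw [lapApply, lapApply, h.degree_switch hG, h.sum_neighborFinset_switch hG]
  ring

lemma quadForm_switch (hG : G.IsAcyclic) (h : Switchable G a₁ n₁ n₂ a₂) (f : V → ℝ) :
    quadForm (switch G a₁ n₁ n₂ a₂) f =
      quadForm G f - 2 * ((f a₁ - f a₂) * (f n₂ - f n₁)) := by
  simp only [quadForm_eq_dotProduct, dotProduct, h.lapApply_switch hG, mul_sub, mul_add,
    Finset.sum_sub_distrib, Finset.sum_add_distrib, mul_ite, mul_zero, Finset.sum_ite_eq',
    Finset.mem_univ, if_true]
  ring

lemma isInterior_fst (hG : IsTreeWithBoundary G) (h : Switchable G a₁ n₁ n₂ a₂) :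
    IsInterior G n₁ := by
  obtain ⟨p, h₁, -⟩ := h.exists_walk
  refine (isBoundary_or_isInterior hG n₁).resolve_left fun hb => ?_
  cases p with
  | nil => exact h.ne rfl
  | cons hadj q =>
    refine h₁ ?_
    rw [eq_of_adj_of_isBoundary hb h.adj₁.symm hadj]
    simp

end Switchable

end Switching

section FaberKrahn

variable {V : Type*} [Fintype V] {G : SimpleGraph V} {f : V → ℝ} {a₁ n₁ n₂ a₂ : V}

/-- The Faber–Krahn property: `G` minimizes the first Dirichlet eigenvalue among the trees with
boundary that have its degree sequence. -/
def IsFaberKrahn (G : SimpleGraph V) : Prop :=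
  IsTreeWithBoundary G ∧ ∀ G' : SimpleGraph V, IsTreeWithBoundary G' →
    degreeMultiset G' = degreeMultiset G → dirichletLambda G ≤ dirichletLambda G'

lemma IsFaberKrahn.isDirichletEigenpair_switch (hG : IsFaberKrahn G)
    (hf : IsDirichletEigenpair G (dirichletLambda G) f) (h : Switchable G a₁ n₁ n₂ a₂)
    (hle : 0 ≤ (f a₁ - f a₂) * (f n₂ - f n₁)) :
    IsDirichletEigenpair (switch G a₁ n₁ n₂ a₂) (dirichletLambda G) f := by
  have hac := hG.1.1.isAcyclic
  have hT := h.isTreeWithBoundary_switch hG.1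
  have hb (v : V) (hv : IsBoundary (switch G a₁ n₁ n₂ a₂) v) : f v = 0 :=
    hf.2.1 v ((h.isBoundary_switch_iff hac v).1 hv)
  have hpos : 0 < f ⬝ᵥ f := by simpa using Matrix.dotProduct_self_star_pos_iff.2 hf.1
  have hquad : quadForm (switch G a₁ n₁ n₂ a₂) f ≤ dirichletLambda G * (f ⬝ᵥ f) := by
    rw [h.quadForm_switch hac, hf.quadForm_eq hG.1]
    linarith
  have hlam : dirichletLambda (switch G a₁ n₁ n₂ a₂) = dirichletLambda G :=
    (le_of_mul_le_mul_right ((dirichletLambda_mul_le_quadForm hT hb).trans hquad) hpos).antisymm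
      (hG.2 _ hT (h.degreeMultiset_switch hac))
  rw [← hlam] at hquad ⊢
  exact isDirichletEigenpair_of_quadForm_le hT hb hf.1 hquad

theorem IsFaberKrahn.eq_of_switchable (hG : IsFaberKrahn G)
    (hf : IsDirichletEigenpair G (dirichletLambda G) f) (h : Switchable G a₁ n₁ n₂ a₂)
    (hle : 0 ≤ (f a₁ - f a₂) * (f n₂ - f n₁)) :
    f a₁ = f a₂ ∧ (IsInterior G a₁ → f n₁ = f n₂) := by
  have hac := hG.1.1.isAcyclic
  have hlap (v : V) (hv : IsInterior G v) : lapApply (switch G a₁ n₁ n₂ a₂) f v = lapApply G f v :=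
    ((hG.isDirichletEigenpair_switch hf h hle).2.2 v
      ((h.isInterior_switch_iff hac v).2 hv)).trans (hf.2.2 v hv).symm
  simp only [h.lapApply_switch hac] at hlap
  constructor
  · have := hlap n₁ (h.isInterior_fst hG.1)
    simp only [h.adj₁.ne', h.symm.ne₁₂.symm, h.ne, if_false, if_true] at this
    linarith
  · intro ha
    have := hlap a₁ ha
    simp only [h.adj₁.ne, h.ends_ne hac, h.ne₁₂, if_false, if_true] at this
    linarith

/-- What the combinatorial part of the argument retains of a non-negative first eigenfunction of a
tree with the Faber–Krahn property: it is positive exactly on the interior, and an inequality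
between the inner vertices of a switchable path passes to its ends. -/
structure IsSwitchMonotone (G : SimpleGraph V) (f : V → ℝ) : Prop where
  nonneg (v : V) : 0 ≤ f v
  pos_iff (v : V) : 0 < f v ↔ IsInterior G v
  le {a₁ n₁ n₂ a₂ : V} : Switchable G a₁ n₁ n₂ a₂ → f n₁ ≤ f n₂ → f a₁ ≤ f a₂
  lt {a₁ n₁ n₂ a₂ : V} :
    Switchable G a₁ n₁ n₂ a₂ → IsInterior G a₁ → f n₁ < f n₂ → f a₁ < f a₂

theorem IsFaberKrahn.isSwitchMonotone (hG : IsFaberKrahn G)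
    (hf : IsDirichletEigenpair G (dirichletLambda G) f) (hnn : ∀ v, 0 ≤ f v) :
    IsSwitchMonotone G f where
  nonneg := hnn
  pos_iff := hf.pos_iff_isInterior hG.1 hnn
  le h hn := by
    by_contra! hlt
    exact hlt.ne' (hG.eq_of_switchable hf h
      (mul_nonneg (sub_nonneg.2 hlt.le) (sub_nonneg.2 hn))).1
  lt h ha hn := by
    by_contra! hle
    exact hn.ne ((hG.eq_of_switchable hf h
      (mul_nonneg (sub_nonneg.2 hle) (sub_nonneg.2 hn.le))).2 ha)

end FaberKrahn

section RootedTree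

variable {V : Type*} {G : SimpleGraph V} {r a b v w p q : V}

/-- `a` is an ancestor of `b`, possibly `b` itself, in the tree `G` rooted at `r`. -/
def IsAncestor (G : SimpleGraph V) (r : V) : V → V → Prop :=
  Relation.ReflTransGen (IsChild G r)

lemma IsAncestor.dist_le (h : IsAncestor G r a b) : G.dist r a ≤ G.dist r b := by
  induction h with
  | refl => exact le_rfl
  | tail _ hc ih => exact ih.trans (hc.2 ▸ Nat.le_succ _)

lemma IsAncestor.exists_walk (h : IsAncestor G r a b) :
    ∃ p : G.Walk a b, ∀ x ∈ p.support, IsAncestor G r a x ∧ IsAncestor G r x b := by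
  induction h with
  | refl => exact ⟨.nil, fun x hx => by
      rw [Walk.mem_support_nil_iff.1 hx]
      exact ⟨.refl, .refl⟩⟩
  | @tail b c hab hc ih =>
    obtain ⟨p, hp⟩ := ih
    refine ⟨p.concat hc.1, fun x hx => ?_⟩
    rw [Walk.support_concat, List.mem_append, List.mem_singleton] at hx
    rcases hx with hx | rfl
    · exact ⟨(hp x hx).1, (hp x hx).2.tail hc⟩
    · exact ⟨hab.tail hc, .refl⟩

lemma exists_isChild_of_dist_ne_zero (hG : G.Connected) (hv : G.dist r v ≠ 0) :
    ∃ p, IsChild G r p v := by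
  obtain ⟨P, hP⟩ := hG.exists_walk_length_eq_dist v r
  cases P with
  | nil => exact absurd dist_self hv
  | @cons _ p _ hvp Q =>
    refine ⟨p, hvp.symm, ?_⟩
    have hQ := dist_le Q
    have htri := hG.dist_triangle (u := v) (v := p) (w := r)
    rw [dist_eq_one_iff_adj.2 hvp] at htri
    rw [Walk.length_cons] at hP
    rw [G.dist_comm (u := r), G.dist_comm (u := r)]
    omega

lemma isAncestor_root (hG : G.Connected) (r v : V) : IsAncestor G r r v := by
  induction hn : G.dist r v generalizing v with
  | zero =>
    rw [hG.dist_eq_zero_iff] at hn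
    exact hn ▸ .refl
  | succ n ih =>
    obtain ⟨p, hp⟩ := exists_isChild_of_dist_ne_zero hG (r := r) (v := v) (by omega)
    have hpv := hp.2
    exact (ih p (by omega)).tail hp

lemma exists_walk_through_ancestors (hG : G.Connected) (r p q : V) :
    ∃ P : G.Walk p q, ∀ x ∈ P.support, IsAncestor G r x p ∨ IsAncestor G r x q := by
  obtain ⟨P, hP⟩ := (isAncestor_root hG r p).exists_walk
  obtain ⟨Q, hQ⟩ := (isAncestor_root hG r q).exists_walk
  refine ⟨P.reverse.append Q, fun x hx => ?_⟩
  rw [Walk.mem_support_append_iff, Walk.support_reverse, List.mem_reverse] at hx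
  exact hx.imp (fun h => (hP x h).2) fun h => (hQ x h).2

lemma IsChild.not_isAncestor (h : IsChild G r p v) (hq : G.dist r q ≤ G.dist r p) :
    ¬ IsAncestor G r v q := fun hv => by
  have := hv.dist_le
  have := h.2
  omega

lemma IsChild.parent_unique (hG : G.IsTree) (hp : IsChild G r p v) (hq : IsChild G r q v) :
    p = q := by
  by_contra hne
  obtain ⟨P, hP⟩ := exists_walk_through_ancestors hG.connected r p q
  rcases hP v (mem_support_of_adj_of_adj hG.isAcyclic hp.1.symm hq.1.symm hne P) with h | h
  exacts [hp.not_isAncestor le_rfl h, hq.not_isAncestor le_rfl h]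

lemma IsChild.switchable (hG : G.Connected) (hv : IsChild G r p v) (hw : IsChild G r q w)
    (hne : p ≠ q) (hvq : ¬ IsAncestor G r v q) (hwp : ¬ IsAncestor G r w p) :
    Switchable G v p q w := by
  obtain ⟨P, hP⟩ := exists_walk_through_ancestors hG r p q
  exact ⟨hv.1.symm, hw.1.symm, hne, P,
    fun h => (hP v h).elim (hv.not_isAncestor le_rfl) hvq,
    fun h => (hP w h).elim hwp (hw.not_isAncestor le_rfl)⟩

lemma IsAncestor.switchable (hab : IsAncestor G r a b) (hne : a ≠ b) (ha : IsChild G r p a)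
    (hb : IsChild G r b v) : Switchable G p a b v := by
  obtain ⟨P, hP⟩ := hab.exists_walk
  exact ⟨ha.1, hb.1.symm, hne, P, fun h => ha.not_isAncestor le_rfl (hP p h).1,
    fun h => hb.not_isAncestor le_rfl (hP v h).2⟩

variable [Fintype V]

lemma exists_isChild_of_isInterior (hG : G.IsTree) (r : V) (hv : IsInterior G v) :
    ∃ c, IsChild G r v c := by
  by_contra! hno
  have hparent (x : V) (hx : x ∈ G.neighborFinset v) : IsChild G r x v := by
    rw [mem_neighborFinset] at hx
    exact ⟨hx.symm, (hG.dist_eq_dist_add_one_of_adj r hx).resolve_right fun h => hno x ⟨hx, h⟩⟩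
  obtain ⟨x, hx, y, hy, hxy⟩ := Finset.one_lt_card.1 (show 1 < #(G.neighborFinset v) from hv)
  exact hxy ((hparent x hx).parent_unique hG (hparent y hy))

lemma IsChild.isInterior (hG : IsTreeWithBoundary G) (hr : IsInterior G r)
    (h : IsChild G r p v) : IsInterior G p := by
  by_cases h0 : G.dist r p = 0
  · rwa [← hG.1.connected.dist_eq_zero_iff.1 h0]
  obtain ⟨q, hq⟩ := exists_isChild_of_dist_ne_zero hG.1.connected h0
  refine (isBoundary_or_isInterior hG p).resolve_left fun hb => ?_
  have hqv : q = v := eq_of_adj_of_isBoundary hb hq.1.symm h.1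
  have := h.2
  have := hq.2
  subst hqv
  omega

end RootedTree

section Monotonicity

variable {V : Type*} [Fintype V] {G : SimpleGraph V} {f : V → ℝ} {r a b v w : V}

lemma IsSwitchMonotone.isInterior_of_forall_le (hG : IsTreeWithBoundary G)
    (H : IsSwitchMonotone G f) (hr : ∀ v, f v ≤ f r) : IsInterior G r := by
  obtain ⟨v, hv⟩ := hG.2.1
  exact (H.pos_iff r).1 (((H.pos_iff v).2 hv).trans_le (hr v))

/-- If `f a < f b`, then switching passes the strict inequality to the parent of `a` and a child
of `b`, and so on up to the root, where `f` is maximal. -/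
theorem IsSwitchMonotone.le_of_isAncestor (hG : IsTreeWithBoundary G) (H : IsSwitchMonotone G f)
    (hr : ∀ v, f v ≤ f r) (hab : IsAncestor G r a b) : f b ≤ f a := by
  induction isAncestor_root hG.1.connected r a generalizing b with
  | refl => exact hr b
  | @tail p a _ ha ih =>
    by_contra! hlt
    have hb : IsInterior G b := (H.pos_iff b).1 ((H.nonneg a).trans_lt hlt)
    obtain ⟨c, hc⟩ := exists_isChild_of_isInterior hG.1 r hb
    have hp : IsInterior G p := ha.isInterior hG (H.isInterior_of_forall_le hG hr)
    have hpc : f p < f c :=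
      H.lt (hab.switchable (by rintro rfl; exact hlt.false) ha hc) hp hlt
    exact hpc.not_ge (ih ((hab.head ha).tail hc))

theorem IsSwitchMonotone.le_of_dist_lt (hG : IsTreeWithBoundary G) (H : IsSwitchMonotone G f)
    (hr : ∀ v, f v ≤ f r) (hvw : G.dist r v < G.dist r w) : f w ≤ f v := by
  have hconn := hG.1.connected
  induction isAncestor_root hconn r v generalizing w with
  | refl => exact hr w
  | @tail p v _ hv ih =>
    obtain ⟨q, hw⟩ := exists_isChild_of_dist_ne_zero hconn (Nat.ne_zero_of_lt hvw)
    have hpv := hv.2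
    have hqw := hw.2
    have hpq : G.dist r p < G.dist r q := by omega
    by_cases hvq : IsAncestor G r v q
    · exact H.le_of_isAncestor hG hr (hvq.tail hw)
    · have hs : Switchable G w q p v :=
        hw.switchable hconn hv (by rintro rfl; exact hpq.false) (hw.not_isAncestor hpq.le) hvq
      exact H.le hs (ih hpq)

end Monotonicity

section BreadthFirst

variable {V : Type*} {G : SimpleGraph V} {r : V} {s : V → V → Prop} {u v w : V}

/-- The breadth-first order of the vertices of the tree `G` rooted at `r`: by height, then by the
order of the parents, siblings being compared by `s`. -/
inductive BreadthFirst (G : SimpleGraph V) (r : V) (s : V → V → Prop) : V → V → Prop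
  | height {v w : V} : G.dist r v < G.dist r w → BreadthFirst G r s v w
  | child {p q v w : V} : BreadthFirst G r s p q → IsChild G r p v → IsChild G r q w →
      BreadthFirst G r s v w
  | sibling {p v w : V} : IsChild G r p v → IsChild G r p w → s v w → BreadthFirst G r s v w

namespace BreadthFirst

lemma dist_le (h : BreadthFirst G r s v w) : G.dist r v ≤ G.dist r w := by
  induction h with
  | height h => exact h.le
  | child _ hv hw ih =>
    rw [hv.2, hw.2]
    exact Nat.succ_le_succ ih
  | sibling hv hw _ => exact (hv.2.trans hw.2.symm).le

lemma ne [Std.Irrefl s] (hG : G.IsTree) (h : BreadthFirst G r s v w) : v ≠ w := by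
  induction h with
  | height h => exact fun hvw => h.ne (congrArg (G.dist r) hvw)
  | child _ hv hw ih =>
    rintro rfl
    exact ih (hv.parent_unique hG hw)
  | sibling _ _ h =>
    rintro rfl
    exact irrefl _ h

lemma trans [IsTrans V s] (hG : G.IsTree) (huv : BreadthFirst G r s u v)
    (hvw : BreadthFirst G r s v w) : BreadthFirst G r s u w := by
  induction huv generalizing w with
  | height h => exact height (h.trans_le hvw.dist_le)
  | child hpq hu hv ih =>
    cases hvw with
    | height h => exact height ((child hpq hu hv).dist_le.trans_lt h)
    | child hpq' hv' hw =>
      cases hv.parent_unique hG hv'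
      exact child (ih hpq') hu hw
    | sibling hv' hw _ =>
      cases hv.parent_unique hG hv'
      exact child hpq hu hw
  | sibling hu hv hs =>
    cases hvw with
    | height h => exact height ((sibling hu hv hs).dist_le.trans_lt h)
    | child hpq hv' hw =>
      cases hv.parent_unique hG hv'
      exact child hpq hu hw
    | sibling hv' hw hs' =>
      cases hv.parent_unique hG hv'
      exact sibling hu hw (_root_.trans hs hs')

lemma trichotomous [Std.Trichotomous s] (hG : G.Connected)
    (hvw : ¬ BreadthFirst G r s v w) (hwv : ¬ BreadthFirst G r s w v) : v = w := by
  have hd : G.dist r v = G.dist r w :=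
    le_antisymm (not_lt.1 fun h => hwv (height h)) (not_lt.1 fun h => hvw (height h))
  induction isAncestor_root hG r v generalizing w with
  | refl => exact hG.dist_eq_zero_iff.1 (hd.symm.trans dist_self)
  | @tail p v _ hv ih =>
    have hpv := hv.2
    obtain ⟨q, hw⟩ := exists_isChild_of_dist_ne_zero hG (r := r) (v := w) (by omega)
    have hqw := hw.2
    obtain rfl : p = q :=
      ih (fun h => hvw (child h hv hw)) (fun h => hwv (child h hw hv)) (by omega)
    exact Std.Trichotomous.trichotomous (r := s) v w
      (fun h => hvw (sibling hv hw h)) fun h => hwv (sibling hw hv h)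

theorem isStrictTotalOrder [IsStrictTotalOrder V s] (hG : G.IsTree) (r : V) :
    IsStrictTotalOrder V (BreadthFirst G r s) where
  trichotomous _ _ := trichotomous hG.connected
  irrefl _ h := h.ne hG rfl
  trans _ _ _ := trans hG

theorem apply_le [Fintype V] [Std.Irrefl s] {f : V → ℝ} (hG : IsTreeWithBoundary G)
    (H : IsSwitchMonotone G f) (hr : ∀ v, f v ≤ f r) (hs : ∀ v w, s v w → f w ≤ f v)
    (h : BreadthFirst G r s v w) : f w ≤ f v := by
  induction h with
  | height h => exact H.le_of_dist_lt hG hr h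
  | sibling _ _ h => exact hs _ _ h
  | @child p q v w hpq hv hw ih =>
    rcases hpq.dist_le.lt_or_eq with hlt | heq
    · exact H.le_of_dist_lt hG hr (by rw [hv.2, hw.2]; exact Nat.succ_lt_succ hlt)
    · have hsw : Switchable G w q p v := hw.switchable hG.1.connected hv (hpq.ne hG.1).symm
        (hw.not_isAncestor heq.le) (hv.not_isAncestor heq.ge)
      exact H.le hsw ih

end BreadthFirst

end BreadthFirst

lemma exists_isStrictTotalOrder_antitone {V α : Type*} [LinearOrder α] (f : V → α) :
    ∃ s : V → V → Prop, IsStrictTotalOrder V s ∧ ∀ v w, s v w → f w ≤ f v := by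
  obtain ⟨_, -⟩ := exists_wellFoundedLT V
  let key (v : V) : αᵒᵈ ×ₗ V := toLex (OrderDual.toDual (f v), v)
  have hkey : Function.Injective key := fun v w h => congrArg Prod.snd (toLex.injective h)
  refine ⟨fun v w => key v < key w,
    (RelEmbedding.preimage ⟨key, hkey⟩ (· < ·)).isStrictTotalOrder, fun v w h => ?_⟩
  rcases Prod.Lex.toLex_lt_toLex.1 h with h | h
  exacts [(OrderDual.toDual_lt_toDual.1 h).le, (OrderDual.toDual_inj.1 h.1).ge]

section SpiralLikeOrder

variable {V : Type*} [Fintype V] {G : SimpleGraph V} {f : V → ℝ}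

theorem IsSwitchMonotone.exists_isSLOOrdering (hG : IsTreeWithBoundary G)
    (H : IsSwitchMonotone G f) :
    ∃ v₀ lt, IsSLOOrdering G v₀ lt ∧ ∀ v w, lt v w → f w ≤ f v := by
  have := hG.1.connected.nonempty
  obtain ⟨r, hr⟩ := Finite.exists_max f
  obtain ⟨s, hs, hanti⟩ := exists_isStrictTotalOrder_antitone f
  have hle (v w : V) (h : BreadthFirst G r s v w) : f w ≤ f v := h.apply_le hG H hr hanti
  refine ⟨r, BreadthFirst G r s, ⟨BreadthFirst.isStrictTotalOrder hG.1 r,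
    fun v w => BreadthFirst.dist_le, fun _ _ _ _ => BreadthFirst.child, fun v w h hv => ?_⟩, hle⟩
  refine (isBoundary_or_isInterior hG w).resolve_right fun hw => ?_
  have hvpos := ((H.pos_iff w).2 hw).trans_le (hle v w h)
  exact ((H.pos_iff v).1 hvpos).not_isBoundary hv

theorem IsFaberKrahn.exists_isSLOOrdering (hG : IsFaberKrahn G) :
    ∃ v₀ lt, IsSLOOrdering G v₀ lt ∧ ∀ f : V → ℝ, (∀ v, 0 ≤ f v) →
      IsDirichletEigenpair G (dirichletLambda G) f → ∀ v w, lt v w → f w ≤ f v := by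
  obtain ⟨g, hg⟩ := exists_isDirichletEigenpair hG.1
  have hg' := hg.abs hG.1
  have hgnn : ∀ v, 0 ≤ |g| v := fun v => abs_nonneg (g v)
  obtain ⟨v₀, lt, hlt, hanti⟩ := (hG.isSwitchMonotone hg' hgnn).exists_isSLOOrdering hG.1
  refine ⟨v₀, lt, hlt, fun f hfnn hf v w hvw => ?_⟩
  obtain ⟨c, hc, rfl⟩ := hg'.exists_eq_smul hG.1 hgnn hf hfnn
  exact mul_le_mul_of_nonneg_left (hanti v w hvw) hc

theorem exists_isFaberKrahn (hG : IsTreeWithBoundary G) :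
    ∃ G' : SimpleGraph V, IsFaberKrahn G' ∧ degreeMultiset G' = degreeMultiset G ∧
      dirichletLambda G' ≤ dirichletLambda G := by
  obtain ⟨G', ⟨hG', hdeg⟩, hmin⟩ := Set.exists_min_image
    {G' : SimpleGraph V | IsTreeWithBoundary G' ∧ degreeMultiset G' = degreeMultiset G}
    dirichletLambda (Set.toFinite _) ⟨G, hG, rfl⟩
  exact ⟨G', ⟨hG', fun K hK hd => hmin K ⟨hK, hd.trans hdeg⟩⟩, hdeg, hmin G ⟨hG, rfl⟩⟩

end SpiralLikeOrder

/-- **Lemma.** Let `G` be a tree with boundary with degree sequence `π`. Then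
there is an SLO-tree `G'` on the same vertex set in `T_π` with
`λ(G') ≤ λ(G)`. Moreover, if `G` has the Faber-Krahn property in `T_π`, then
`G` itself admits an SLO-ordering `≺`, along which every non-negative
eigenfunction `f` to `λ(G)` is non-increasing: `v ≺ w → f v ≥ f w`. -/
theorem exists_SLOTree_le {V : Type*} [Fintype V] [DecidableEq V]
    (G : SimpleGraph V) (hG : IsTreeWithBoundary G)
    (π : Multiset ℕ) (hπ : degreeMultiset G = π) :
    (∃ G' : SimpleGraph V, IsTreeWithBoundary G' ∧ degreeMultiset G' = π ∧
        (∃ (v₀ : V) (lt : V → V → Prop), IsSLOOrdering G' v₀ lt) ∧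
        dirichletLambda G' ≤ dirichletLambda G) ∧
    ((∀ G' : SimpleGraph V, IsTreeWithBoundary G' → degreeMultiset G' = π →
        dirichletLambda G ≤ dirichletLambda G') →
      ∃ (v₀ : V) (lt : V → V → Prop), IsSLOOrdering G v₀ lt ∧
        ∀ f : V → ℝ, (∀ v, 0 ≤ f v) →
          IsDirichletEigenpair G (dirichletLambda G) f →
          ∀ v w, lt v w → f w ≤ f v) := by
  subst hπ
  constructor
  · obtain ⟨G', hG', hdeg, hle⟩ := exists_isFaberKrahn hG
    obtain ⟨v₀, lt, hlt, -⟩ := hG'.exists_isSLOOrdering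
    exact ⟨G', hG'.1, hdeg, ⟨v₀, lt, hlt⟩, hle⟩
  · exact fun hmin => IsFaberKrahn.exists_isSLOOrdering ⟨hG, hmin⟩

end FK
end
end
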